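/- Let f be convex and L-smooth on a convex set Ω of diameter D, x* a minimizer of f on Ω. For any x ∈ Ω and any d, x⁺ := x + γ(d − x) with γ ∈ [0,1] and d, x* ∈ Ω and d minimizing ⟨g, ·⟩ over Ω for some vector g. Then f(x⁺) − f(x*) ≤ (1−γ)(f(x) − f(x*)) + γ⟨∇f(x) − g, d − x*⟩ + LD²γ²/2. -/

import Mathlib

open scoped RealInnerProductSpace

/-!
Expand `f` to second order along the segment from `x` to `x + γ(d − x)`: a Lipschitz derivative
bounds the error by `L‖d − x‖²γ²/2`. In the first order term, insert the approximate derivative `g`,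
`⟨∇f(x), d − x⟩ = ⟨∇f(x) − g, d − x*⟩ + ⟨g, d − x*⟩ + ⟨∇f(x), x* − x⟩`;
the second summand is nonpositive because `d` minimizes `g`, and the third is at most `f(x*) − f(x)`
because `f` is convex. With gradients read as elements of the dual, the argument runs in any normed
space.
-/

section

variable {E F : Type*} [NormedAddCommGroup E] [NormedSpace ℝ E]
  [NormedAddCommGroup F] [NormedSpace ℝ F] {s : Set E} {x y : E}

theorem hasDerivWithinAt_comp_lineMap {f : E → F} {f' : E →L[ℝ] F} {t : ℝ} (hs : Convex ℝ s)
    (hx : x ∈ s) (hy : y ∈ s) (hf : HasFDerivWithinAt f f' s (AffineMap.lineMap x y t)) :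
    HasDerivWithinAt (fun r : ℝ => f (AffineMap.lineMap x y r)) (f' (y - x)) (Set.Icc 0 1) t :=
  hf.comp_hasDerivWithinAt t AffineMap.hasDerivWithinAt_lineMap (hs.mapsTo_lineMap hx hy)

theorem norm_sub_sub_le_of_norm_hasFDerivWithinAt_sub_le {f : E → F} {f' : E → E →L[ℝ] F} {C : ℝ}
    (hs : Convex ℝ s) (hf : ∀ z ∈ s, HasFDerivWithinAt f (f' z) s z)
    (bound : ∀ z ∈ s, ‖f' z - f' x‖ ≤ C * ‖z - x‖) (hx : x ∈ s) (hy : y ∈ s) :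
    ‖f y - f x - f' x (y - x)‖ ≤ C / 2 * ‖y - x‖ ^ 2 := by
  let remainder : E → F := fun z => f z - f x - f' x (z - x)
  have hasFDeriv_remainder : ∀ z ∈ s, HasFDerivWithinAt remainder (f' z - f' x) s z := fun z hz =>
    ((hf z hz).sub_const (f x)).sub
      ((f' x).hasFDerivAt.comp_hasFDerivWithinAt z ((hasFDerivWithinAt_id z s).sub_const x))
  have hasDeriv_line : ∀ t ∈ Set.Icc (0 : ℝ) 1,
      HasDerivWithinAt (fun r : ℝ => remainder (AffineMap.lineMap x y r))
        ((f' (AffineMap.lineMap x y t) - f' x) (y - x)) (Set.Icc 0 1) t := fun t ht =>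
    hasDerivWithinAt_comp_lineMap hs hx hy (hasFDeriv_remainder _ (hs.lineMap_mem hx hy ht))
  have hasDeriv_quadratic (t : ℝ) :
      HasDerivAt (fun r : ℝ => C / 2 * ‖y - x‖ ^ 2 * r ^ 2) (C * ‖y - x‖ ^ 2 * t) t :=
    ((hasDerivAt_pow 2 t).const_mul _).congr_deriv (by push_cast; ring)
  have norm_deriv_le : ∀ t ∈ Set.Ico (0 : ℝ) 1,
      ‖(f' (AffineMap.lineMap x y t) - f' x) (y - x)‖ ≤ C * ‖y - x‖ ^ 2 * t := fun t ht =>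
    calc ‖(f' (AffineMap.lineMap x y t) - f' x) (y - x)‖
        ≤ ‖f' (AffineMap.lineMap x y t) - f' x‖ * ‖y - x‖ := ContinuousLinearMap.le_opNorm _ _
      _ ≤ C * ‖AffineMap.lineMap x y t - x‖ * ‖y - x‖ := by
        gcongr
        exact bound _ (hs.lineMap_mem hx hy ⟨ht.1, ht.2.le⟩)
      _ = C * ‖y - x‖ ^ 2 * t := by
        rw [AffineMap.lineMap_apply_module', add_sub_cancel_right, norm_smul,
          Real.norm_of_nonneg ht.1]
        ring
  simpa [remainder] using image_norm_le_of_norm_deriv_right_le_deriv_boundary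
    (fun t ht => (hasDeriv_line t ht).continuousWithinAt)
    (fun t ht => (hasDeriv_line t ⟨ht.1, ht.2.le⟩).mono_of_mem_nhdsWithin
      (Icc_mem_nhdsGE_of_mem ht))
    (by simp [remainder]) hasDeriv_quadratic norm_deriv_le (Set.right_mem_Icc.2 zero_le_one)

theorem apply_sub_le_sub_of_convexOn_of_hasFDerivWithinAt {f : E → ℝ} {f' : StrongDual ℝ E}
    (hconv : ConvexOn ℝ s f) (hf : HasFDerivWithinAt f f' s x) (hx : x ∈ s) (hy : y ∈ s) :
    f' (y - x) ≤ f y - f x := by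
  have convexOn_line : ConvexOn ℝ (Set.Icc (0 : ℝ) 1) (f ∘ AffineMap.lineMap x y) :=
    (hconv.comp_affineMap (AffineMap.lineMap x y)).subset (hconv.1.mapsTo_lineMap hx hy)
      (convex_Icc 0 1)
  have hasDeriv_line : HasDerivWithinAt (f ∘ AffineMap.lineMap x y) (f' (y - x))
      (Set.Icc (0 : ℝ) 1) 0 :=
    hasDerivWithinAt_comp_lineMap hconv.1 hx hy (by rwa [AffineMap.lineMap_apply_zero])
  simpa [slope_def_field] using convexOn_line.le_slope_of_hasDerivWithinAt
    (Set.left_mem_Icc.2 zero_le_one) (Set.right_mem_Icc.2 zero_le_one) zero_lt_one hasDeriv_line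

theorem le_add_apply_sub_add_sq_of_lipschitzOnWith {f : E → ℝ} {f' : E → StrongDual ℝ E}
    {K : NNReal} (hs : Convex ℝ s) (hf : ∀ z ∈ s, HasFDerivWithinAt f (f' z) s z)
    (hLip : LipschitzOnWith K f' s) (hx : x ∈ s) (hy : y ∈ s) :
    f y ≤ f x + f' x (y - x) + K / 2 * ‖y - x‖ ^ 2 := by
  have remainder_le := le_of_abs_le <| norm_sub_sub_le_of_norm_hasFDerivWithinAt_sub_le hs hf
    (fun z hz => hLip.norm_sub_le hz hx) hx hy
  linarith

theorem fw_one_step_descent_general {f : E → ℝ} {f' : E → StrongDual ℝ E} {K : NNReal}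
    {g : StrongDual ℝ E} {d xs : E} {D γ : ℝ} (hconv : ConvexOn ℝ s f)
    (hf : ∀ z ∈ s, HasFDerivWithinAt f (f' z) s z) (hLip : LipschitzOnWith K f' s)
    (hx : x ∈ s) (hxs : xs ∈ s) (hstep : x + γ • (d - x) ∈ s) (hdist : ‖d - x‖ ≤ D)
    (hmin : g d ≤ g xs) (hγ : 0 ≤ γ) :
    f (x + γ • (d - x)) - f xs
      ≤ (1 - γ) * (f x - f xs) + γ * (f' x - g) (d - xs) + K * D ^ 2 * γ ^ 2 / 2 := by
  have descent : f (x + γ • (d - x)) ≤ f x + γ * f' x (d - x) + K / 2 * (γ * ‖d - x‖) ^ 2 := by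
    simpa [norm_smul, abs_of_nonneg hγ] using
      le_add_apply_sub_add_sq_of_lipschitzOnWith hconv.1 hf hLip hx hstep
  have first_order_le : f' x (d - x) ≤ (f' x - g) (d - xs) - (f x - f xs) := by
    have convexity := apply_sub_le_sub_of_convexOn_of_hasFDerivWithinAt hconv (hf x hx) hx hxs
    simp only [map_sub, sub_apply] at convexity ⊢
    linarith
  calc f (x + γ • (d - x)) - f xs
      ≤ f x + γ * f' x (d - x) + K / 2 * (γ * ‖d - x‖) ^ 2 - f xs := by gcongr
    _ ≤ f x + γ * ((f' x - g) (d - xs) - (f x - f xs)) + K / 2 * (γ * D) ^ 2 - f xs := by gcongr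
    _ = (1 - γ) * (f x - f xs) + γ * (f' x - g) (d - xs) + K * D ^ 2 * γ ^ 2 / 2 := by ring

end

/-- One-step descent inequality for the (stochastic) Frank–Wolfe update:
if `x⁺ = x + γ(d − x)` with `d` minimizing `⟨g, ·⟩` over `Ω`, then
`f(x⁺) − f(x*) ≤ (1−γ)(f(x) − f(x*)) + γ⟨∇f(x) − g, d − x*⟩ + LD²γ²/2`. -/
theorem fw_one_step_descent
    {n : ℕ} (Ω : Set (EuclideanSpace ℝ (Fin n))) (hΩ : Convex ℝ Ω)
    (D L γ : ℝ) (hL : 0 < L)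
    (hdiam : ∀ a ∈ Ω, ∀ b ∈ Ω, ‖a - b‖ ≤ D)
    (f : EuclideanSpace ℝ (Fin n) → ℝ)
    (gf : EuclideanSpace ℝ (Fin n) → EuclideanSpace ℝ (Fin n))
    (hconv : ConvexOn ℝ Set.univ f)
    (hgrad : ∀ x, HasGradientAt f (gf x) x)
    (hLip : LipschitzWith (Real.toNNReal L) gf)
    (x dvec xs : EuclideanSpace ℝ (Fin n))
    (hx : x ∈ Ω) (hd : dvec ∈ Ω) (hxs : xs ∈ Ω)
    (g : EuclideanSpace ℝ (Fin n)) (hmin : ∀ y ∈ Ω, ⟪g, dvec⟫ ≤ ⟪g, y⟫)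
    (hγ : γ ∈ Set.Icc (0 : ℝ) 1) :
    f (x + γ • (dvec - x)) - f xs
      ≤ (1 - γ) * (f x - f xs) + γ * ⟪gf x - g, dvec - xs⟫ + L * D ^ 2 * γ ^ 2 / 2 := by
  have hLip_dual : LipschitzWith L.toNNReal fun z => InnerProductSpace.toDual ℝ _ (gf z) := by
    simpa only [one_mul, Function.comp_def] using (InnerProductSpace.toDual ℝ _).lipschitz.comp hLip
  simpa [hL.le, inner_sub_left] using fw_one_step_descent_general
    (g := InnerProductSpace.toDual ℝ _ g) hconv (fun z _ => (hgrad z).hasFDerivAt.hasFDerivWithinAt)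
    hLip_dual.lipschitzOnWith (Set.mem_univ x) (Set.mem_univ xs) (Set.mem_univ _)
    (hdiam dvec hd x hx) (hmin xs hxs) hγ.1
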